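/- Let A ∈ ℝ^{n×n}, B ∈ ℝ^{n×m}, C ∈ ℝ^{p×n}, μ := (p+m)·n, F ∈ ℝ^{n×n}, L ∈ ℝ^{n×p}, and let T ∈ ℝ^{n×n} be invertible with F·T = T·(A − L·C). Define θ := [vec(T·L); vec(T·B)], Π := θ^⊤ ⊗ T^{−1}, F_ξ := I_μ ⊗ F, B_ξ := [0_{pn²×m}; I_m ⊗ vec(I_n)], L_ξ := [I_p ⊗ vec(I_n); 0_{mn²×p}], C_ξ := C·Π, A_ξ := F_ξ + L_ξ·C_ξ. Let x : ℝ → ℝ^n be differentiable with x'(t) = A·x(t) + B·u(t), y(t) := C·x(t), and let M : ℝ → ℝ^{n×μ} be differentiable with M'(t) = F·M(t) + [y(t)^⊤ ⊗ I_n , u(t)^⊤ ⊗ I_n] for all t ≥ 0. Define ξ̂(t) := vec(M(t)) and β(t) := T·x(t) − M(t)·θ. Then for all t ≥ 0: ξ̂'(t) = A_ξ·ξ̂(t) + L_ξ·C·T^{−1}·β(t) + B_ξ·u(t). -/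

import Mathlib

open Matrix Filter
open scoped Kronecker

/-- Column-stacking vectorization `vec X : (col, row) ↦ X row col`
(`vec X` stacks the columns of `X` one below another). -/
def mvec {l : ℕ} {K : Type*} (X : Matrix (Fin l) K ℝ) : K × Fin l → ℝ :=
  fun q => X q.2 q.1

/-- The Kronecker product `θᵀ ⊗ S` of a row vector `θᵀ` with a square matrix `S`,
with the trivial row index of `θᵀ` flattened away. -/
def rowKron {n : ℕ} {K : Type*} (θ : K → ℝ) (S : Matrix (Fin n) (Fin n) ℝ) :
    Matrix (Fin n) (K × Fin n) ℝ :=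
  ((Matrix.of fun (_ : Fin 1) j => θ j) ⊗ₖ S).submatrix (fun i => ((0 : Fin 1), i)) id

/-- Column index set of the Kreisselmeier filter state `M ∈ ℝ^{n × (p+m)n}`. -/
abbrev Kix (n m p : ℕ) := (Fin p × Fin n) ⊕ (Fin m × Fin n)

/-- The regressor `[yᵀ ⊗ Iₙ , uᵀ ⊗ Iₙ] ∈ ℝ^{n × (p+m)n}` (horizontal concatenation). -/
def regressor {m p : ℕ} (n : ℕ) (y : Fin p → ℝ) (u : Fin m → ℝ) :
    Matrix (Fin n) (Kix n m p) ℝ :=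
  Matrix.fromCols (rowKron y (1 : Matrix (Fin n) (Fin n) ℝ))
    (rowKron u (1 : Matrix (Fin n) (Fin n) ℝ))

/-- A real square matrix is Hurwitz if all of its eigenvalues over `ℂ`
have strictly negative real part. -/
def IsHurwitz {N : Type*} [Fintype N] [DecidableEq N] (A : Matrix N N ℝ) : Prop :=
  ∀ z ∈ spectrum ℂ (A.map (Complex.ofReal : ℝ → ℂ)), z.re < 0

/-- PBH test for stabilizability: for every `λ ∈ ℂ` with `Re λ ≥ 0`,
`rank [λ·I − A₀ , B₀] = q` over `ℂ`. -/
def IsStabilizable {q m : Type*} [Fintype q] [DecidableEq q] [Fintype m]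
    (A₀ : Matrix q q ℝ) (B₀ : Matrix q m ℝ) : Prop :=
  ∀ z : ℂ, 0 ≤ z.re →
    (Matrix.fromCols (z • (1 : Matrix q q ℂ) - A₀.map (Complex.ofReal : ℝ → ℂ))
      (B₀.map (Complex.ofReal : ℝ → ℂ))).rank = Fintype.card q

/-- Euclidean norm of a vector. -/
noncomputable def euclNorm {ι : Type*} [Fintype ι] (v : ι → ℝ) : ℝ :=
  Real.sqrt (∑ i, v i ^ 2)

/-- Frobenius norm of a matrix. -/
noncomputable def frobNorm {ι K : Type*} [Fintype ι] [Fintype K] (X : Matrix ι K ℝ) : ℝ :=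
  Real.sqrt (∑ i, ∑ j, X i j ^ 2)

/-- `F_ξ := I_μ ⊗ F`. -/
def Fxi {n m p : ℕ} (F : Matrix (Fin n) (Fin n) ℝ) :
    Matrix (Kix n m p × Fin n) (Kix n m p × Fin n) ℝ :=
  (1 : Matrix (Kix n m p) (Kix n m p) ℝ) ⊗ₖ F

/-- `B_ξ := [0_{pn²×m} ; I_m ⊗ vec(I_n)]` (vertical concatenation), written entrywise
on the flattened row index `Kix n m p × Fin n`. -/
def Bxi (n m p : ℕ) : Matrix (Kix n m p × Fin n) (Fin m) ℝ :=
  Matrix.of fun q j =>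
    Sum.elim (fun _ => (0 : ℝ))
      (fun ja => (1 : Matrix (Fin m) (Fin m) ℝ) ja.1 j *
        (1 : Matrix (Fin n) (Fin n) ℝ) ja.2 q.2) q.1

/-- `L_ξ := [I_p ⊗ vec(I_n) ; 0_{mn²×p}]` (vertical concatenation), written entrywise
on the flattened row index `Kix n m p × Fin n`. -/
def Lxi (n m p : ℕ) : Matrix (Kix n m p × Fin n) (Fin p) ℝ :=
  Matrix.of fun q j =>
    Sum.elim (fun ya => (1 : Matrix (Fin p) (Fin p) ℝ) ya.1 j *
        (1 : Matrix (Fin n) (Fin n) ℝ) ya.2 q.2) (fun _ => (0 : ℝ)) q.1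

/-!
The filter sees the plant only through `y = C x`, and the definition of `β` makes
`Π ξ̂ + T⁻¹ β = x` an algebraic identity: `Π vec(M) = T⁻¹ M θ` cancels the term `-T⁻¹ M θ` in
`T⁻¹ β = x - T⁻¹ M θ`. Vectorizing the filter equation gives `ξ̂' = F_ξ ξ̂ + L_ξ y + B_ξ u`, and
substituting `y = C (Π ξ̂ + T⁻¹ β)` yields the claim.
-/

theorem mvec_add {l : ℕ} {K : Type*} (X Y : Matrix (Fin l) K ℝ) :
    mvec (X + Y) = mvec X + mvec Y :=
  vec_add X Y

theorem rowKron_apply {n : ℕ} {K : Type*} (θ : K → ℝ) (S : Matrix (Fin n) (Fin n) ℝ)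
    (i : Fin n) (k : K × Fin n) : rowKron θ S i k = θ k.1 * S i k.2 :=
  rfl

theorem rowKron_mulVec_mvec {n : ℕ} {K : Type*} [Fintype K] (θ : K → ℝ)
    (S : Matrix (Fin n) (Fin n) ℝ) (X : Matrix (Fin n) K ℝ) :
    rowKron θ S *ᵥ mvec X = S *ᵥ X *ᵥ θ := by
  ext i
  calc (rowKron θ S *ᵥ mvec X) i
      = ((replicateRow (Fin 1) θ ⊗ₖ S) *ᵥ vec X) (0, i) := rfl
    _ = vec (S * X * (replicateRow (Fin 1) θ)ᵀ) (0, i) := by rw [kronecker_mulVec_vec]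
    _ = (S *ᵥ X *ᵥ θ) i := by rw [mulVec_mulVec]; rfl

theorem rowKron_mulVec_mvec_add_mulVec_sub {n : ℕ} {K : Type*} [Fintype K]
    {S T : Matrix (Fin n) (Fin n) ℝ} (hST : S * T = 1) (θ : K → ℝ)
    (X : Matrix (Fin n) K ℝ) (x : Fin n → ℝ) :
    rowKron θ S *ᵥ mvec X + S *ᵥ (T *ᵥ x - X *ᵥ θ) = x := by
  rw [rowKron_mulVec_mvec, ← mulVec_add, add_sub_cancel, mulVec_mulVec, hST, one_mulVec]

section KreisselmeierFilter

variable {n m p : ℕ}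

theorem mvec_mul (F : Matrix (Fin n) (Fin n) ℝ) (X : Matrix (Fin n) (Kix n m p) ℝ) :
    mvec (F * X) = Fxi F *ᵥ mvec X :=
  vec_mul_eq_mulVec F X

theorem mvec_regressor (y : Fin p → ℝ) (u : Fin m → ℝ) :
    mvec (regressor n y u) = Lxi n m p *ᵥ y + Bxi n m p *ᵥ u := by
  ext ⟨⟨a, b⟩ | ⟨a, b⟩, i⟩ <;>
    simp [mvec, regressor, rowKron_apply, Lxi, Bxi, mulVec, dotProduct, one_apply, eq_comm]

theorem mvec_mul_add_regressor (F : Matrix (Fin n) (Fin n) ℝ)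
    (X : Matrix (Fin n) (Kix n m p) ℝ) (y : Fin p → ℝ) (u : Fin m → ℝ) :
    mvec (F * X + regressor n y u)
      = Fxi F *ᵥ mvec X + Lxi n m p *ᵥ y + Bxi n m p *ᵥ u := by
  rw [mvec_add, mvec_mul, mvec_regressor, add_assoc]

theorem mvec_mul_add_regressor_mulVec (C : Matrix (Fin p) (Fin n) ℝ)
    (F : Matrix (Fin n) (Fin n) ℝ) {T : Matrix (Fin n) (Fin n) ℝ} (hT : IsUnit T)
    (θ : Kix n m p → ℝ) (X : Matrix (Fin n) (Kix n m p) ℝ) (x : Fin n → ℝ) (u : Fin m → ℝ) :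
    mvec (F * X + regressor n (C *ᵥ x) u)
      = (Fxi F + Lxi n m p * (C * rowKron θ T⁻¹)) *ᵥ mvec X
        + (Lxi n m p * C * T⁻¹) *ᵥ (T *ᵥ x - X *ᵥ θ) + Bxi n m p *ᵥ u := by
  have hTT : T⁻¹ * T = 1 := nonsing_inv_mul T (T.isUnit_iff_isUnit_det.mp hT)
  have output_eq : C *ᵥ x
      = (C * rowKron θ T⁻¹) *ᵥ mvec X + (C * T⁻¹) *ᵥ (T *ᵥ x - X *ᵥ θ) := by
    rw [← mulVec_mulVec, ← mulVec_mulVec, ← mulVec_add,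
      rowKron_mulVec_mvec_add_mulVec_sub hTT]
  rw [mvec_mul_add_regressor, output_eq, mulVec_add, mulVec_mulVec, mulVec_mulVec, add_mulVec,
    Matrix.mul_assoc (Lxi n m p) C, ← add_assoc (Fxi F *ᵥ mvec X)]

theorem stmt11_general (C : Matrix (Fin p) (Fin n) ℝ) (F : Matrix (Fin n) (Fin n) ℝ)
    {T : Matrix (Fin n) (Fin n) ℝ} (hT : IsUnit T) (θ : Kix n m p → ℝ)
    {M : ℝ → Matrix (Fin n) (Kix n m p) ℝ} {x : Fin n → ℝ} {u : Fin m → ℝ} {t : ℝ}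
    (hM : ∀ i j, HasDerivAt (fun s => M s i j)
      ((F * M t + regressor n (C *ᵥ x) u) i j) t) (q : Kix n m p × Fin n) :
    HasDerivAt (fun s => mvec (M s) q)
      (((Fxi F + Lxi n m p * (C * rowKron θ T⁻¹)).mulVec (mvec (M t))
        + (Lxi n m p * C * T⁻¹).mulVec (T *ᵥ x - M t *ᵥ θ) + (Bxi n m p).mulVec u) q) t := by
  rw [← mvec_mul_add_regressor_mulVec C F hT]
  exact hM q.2 q.1

end KreisselmeierFilter

/-- dynamics of `ξ̂ := vec(M)` driven by the transverse coordinate.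
With `θ := [vec(T·L); vec(T·B)]`, `Pi := θᵀ ⊗ T⁻¹`, `C_ξ := C·Pi`,
`A_ξ := (I_μ ⊗ F) + L_ξ·C_ξ` and `β := T·x − M·θ`, along the trajectories of the plant
and of the filter one has `ξ̂' = A_ξ·ξ̂ + L_ξ·C·T⁻¹·β + B_ξ·u` for all `t ≥ 0`. -/
theorem stmt11 {n m p : ℕ}
    (A : Matrix (Fin n) (Fin n) ℝ) (B : Matrix (Fin n) (Fin m) ℝ)
    (C : Matrix (Fin p) (Fin n) ℝ)
    (F : Matrix (Fin n) (Fin n) ℝ) (L : Matrix (Fin n) (Fin p) ℝ)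
    (T : Matrix (Fin n) (Fin n) ℝ) (hT : IsUnit T)
    (hFT : F * T = T * (A - L * C))
    (θ : Kix n m p → ℝ) (hθ : θ = Sum.elim (mvec (T * L)) (mvec (T * B)))
    (Pim : Matrix (Fin n) (Kix n m p × Fin n) ℝ) (hPim : Pim = rowKron θ T⁻¹)
    (Cξ : Matrix (Fin p) (Kix n m p × Fin n) ℝ) (hCξ : Cξ = C * Pim)
    (Aξ : Matrix (Kix n m p × Fin n) (Kix n m p × Fin n) ℝ)
    (hAξ : Aξ = Fxi F + Lxi n m p * Cξ)
    (u : ℝ → Fin m → ℝ) (x : ℝ → Fin n → ℝ) (M : ℝ → Matrix (Fin n) (Kix n m p) ℝ)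
    (hx : ∀ t, 0 ≤ t → ∀ i, HasDerivAt (fun s => x s i)
        ((A.mulVec (x t) + B.mulVec (u t)) i) t)
    (hM : ∀ t, 0 ≤ t → ∀ i j, HasDerivAt (fun s => M s i j)
        ((F * M t + regressor n (C.mulVec (x t)) (u t)) i j) t)
    (β : ℝ → Fin n → ℝ) (hβ : ∀ t, β t = T.mulVec (x t) - (M t).mulVec θ) :
    ∀ t, 0 ≤ t → ∀ q : Kix n m p × Fin n,
      HasDerivAt (fun s => mvec (M s) q)
        ((Aξ.mulVec (mvec (M t)) + (Lxi n m p * C * T⁻¹).mulVec (β t)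
          + (Bxi n m p).mulVec (u t)) q) t := by
  subst hPim hCξ hAξ
  intro t ht q
  simpa only [hβ] using stmt11_general C F hT θ (hM t ht) q
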